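/- Let n ≥ 2 be an integer such that g_n(X) = X^n + X − 1 is irreducible over ℚ and let θ_n ∈ ℂ be a root of g_n. Then the discriminant of θ_n, i.e. the discriminant of the ℚ-basis (1, θ_n, …, θ_n^{n−1}) of K_n = ℚ(θ_n), equals (−1)^{(n−1)(n−2)/2} · (n^n + (n−1)^{n−1}). -/

import Mathlib

open Polynomial IntermediateField

/-!
Let `f = Xⁿ + aX - c` be the minimal polynomial of `θ`. Up to sign, the discriminant of
`1, θ, …, θⁿ⁻¹` is the norm of `f'(θ)`. From `θⁿ = c - aθ` one gets
`θ f'(θ) = nc - (n - 1)aθ`, which is linear in `θ`. The norm of `s - tθ` is the homogenization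
of `f` evaluated at `(s, t)`, so the norm of `θ f'(θ)` is `c (nⁿcⁿ⁻¹ + (n - 1)ⁿ⁻¹aⁿ)`. Dividing
by the norm `(-1)ⁿ⁻¹c` of `θ` gives the norm of `f'(θ)`.
-/

theorem neg_one_pow_triangle_mul_neg_one_pow {R : Type*} [Monoid R] [HasDistribNeg R] (n : ℕ) :
    (-1 : R) ^ (n * (n - 1) / 2) * (-1) ^ (n - 1) = (-1) ^ ((n - 1) * (n - 2) / 2) := by
  cases n with
  | zero => simp
  | succ m =>
    rw [Nat.triangle_succ, pow_add, mul_assoc, Nat.add_sub_cancel,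
      pow_mul_pow_eq_one m (by simp), mul_one, Nat.add_sub_add_right m 1 1]

section PowerBasis

theorem gen_ne_zero_of_two_le_dim {R S : Type*} [CommRing R] [Nontrivial R] [CommRing S]
    [Algebra R S] (pb : PowerBasis R S) (hdim : 2 ≤ pb.dim) : pb.gen ≠ 0 := by
  simpa using pb.basis.ne_zero ⟨1, hdim⟩

theorem norm_algebraMap_sub_gen {R S : Type*} [CommRing R] [CommRing S] [Algebra R S]
    (pb : PowerBasis R S) (s : R) :
    Algebra.norm R (algebraMap R S s - pb.gen) = (minpoly R pb.gen).eval s := by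
  rw [← charpoly_leftMulMatrix, Matrix.eval_charpoly, Algebra.norm_eq_matrix_det pb.basis, map_sub,
    AlgHom.commutes, Matrix.algebraMap_eq_diagonal, Pi.algebraMap_def, Matrix.scalar_apply]
  rfl

variable {F S : Type*} [Field F] [CommRing S] [Algebra F S]

theorem norm_algebraMap_sub_smul_gen (pb : PowerBasis F S) (s : F) {t : F} (ht : t ≠ 0) :
    Algebra.norm F (algebraMap F S s - t • pb.gen) =
      t ^ pb.dim * (minpoly F pb.gen).eval (s / t) := by
  have hfactor : algebraMap F S s - t • pb.gen =
      algebraMap F S t * (algebraMap F S (s / t) - pb.gen) := by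
    rw [mul_sub, ← map_mul, mul_div_cancel₀ s ht, Algebra.smul_def]
  rw [hfactor, map_mul, norm_algebraMap_sub_gen, Algebra.norm_algebraMap_of_basis pb.basis,
    Fintype.card_fin]

theorem discr_powerBasis_eq_norm_aeval_derivative {L : Type*} [Field L] [Algebra F L]
    (pb : PowerBasis F L) :
    Algebra.discr F pb.basis = (-1) ^ (pb.dim * (pb.dim - 1) / 2) *
      Algebra.norm F (aeval pb.gen (derivative (minpoly F pb.gen))) := by
  have := pb.finite
  by_cases hsep : Algebra.IsSeparable F L
  · rw [Algebra.discr_powerBasis_eq_norm, pb.finrank]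
  have hgen : ¬ IsSeparable F pb.gen := by
    rwa [← isSeparable_adjoin_simple_iff_isSeparable,
      adjoin_eq_top_of_algebra F _ pb.adjoin_gen_eq_top, isSeparable_top]
  have hderiv : derivative (minpoly F pb.gen) = 0 := by
    by_contra h
    exact hgen ((separable_iff_derivative_ne_zero (minpoly.irreducible pb.isIntegral_gen)).2 h)
  have htrace : Algebra.traceMatrix F pb.basis = 0 := by
    ext i j
    simp [Algebra.traceMatrix_apply, Algebra.traceForm_apply,
      Algebra.trace_eq_zero_of_not_isSeparable hsep]
  have : Nonempty (Fin pb.dim) := ⟨⟨0, pb.dim_pos⟩⟩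
  rw [hderiv, Algebra.discr_def, htrace, Matrix.det_zero, map_zero, Algebra.norm_zero, mul_zero]

end PowerBasis

section Trinomial

theorem degree_C_mul_X_sub_C_lt {R : Type*} [Ring R] {n : ℕ} (hn : 2 ≤ n) (a c : R) :
    degree (C a * X - C c) < n :=
  calc
    degree (C a * X - C c) ≤ 1 := by compute_degree
    _ < n := by exact_mod_cast hn

theorem natDegree_trinomial {R : Type*} [Ring R] [Nontrivial R] {n : ℕ} (hn : 2 ≤ n) (a c : R) :
    natDegree (X ^ n + C a * X - C c) = n := by
  rw [add_sub_assoc, natDegree_add_eq_left_of_degree_lt, natDegree_X_pow]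
  rw [degree_X_pow]
  exact degree_C_mul_X_sub_C_lt hn a c

theorem self_mul_aeval_derivative_trinomial {R S : Type*} [CommRing R] [CommRing S] [Algebra R S]
    {n : ℕ} {a c : R} {x : S} (hx : aeval x (X ^ n + C a * X - C c) = 0) :
    x * aeval x (derivative (X ^ n + C a * X - C c)) =
      algebraMap R S (n * c) - ((n - 1) * a) • x := by
  have hpow : (n : S) * (x * x ^ (n - 1)) = n * x ^ n := by cases n <;> simp [pow_succ']
  simp only [map_sub, map_add, map_mul, map_pow, aeval_X, aeval_C, derivative_X_pow,
    derivative_C_mul, derivative_X, derivative_C, map_natCast, mul_one, sub_zero, Algebra.smul_def,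
    map_one] at hx ⊢
  linear_combination hpow + (n : S) * hx

theorem minpoly_eq_trinomial {F B : Type*} [Field F] [Ring B] [Nontrivial B] [Algebra F B]
    {n : ℕ} (hn : 2 ≤ n) {a c : F} (hirr : Irreducible (X ^ n + C a * X - C c)) {x : B}
    (hx : aeval x (X ^ n + C a * X - C c) = 0) : minpoly F x = X ^ n + C a * X - C c := by
  have hmonic : Monic (X ^ n + C a * X - C c) := by
    rw [add_sub_assoc]
    exact monic_X_pow_add (degree_C_mul_X_sub_C_lt hn a c)
  exact (minpoly.eq_of_irreducible_of_monic hirr hx hmonic).symm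

theorem norm_gen_of_minpoly_eq_trinomial {R S : Type*} [CommRing R] [CommRing S] [Algebra R S]
    (pb : PowerBasis R S) (hdim : 2 ≤ pb.dim) {a c : R}
    (hmin : minpoly R pb.gen = X ^ pb.dim + C a * X - C c) :
    Algebra.norm R pb.gen = (-1) ^ (pb.dim - 1) * c := by
  rw [Algebra.PowerBasis.norm_gen_eq_coeff_zero_minpoly, hmin,
    ← pow_sub_one_mul (by lia : pb.dim ≠ 0)]
  simp [coeff_X_pow, (by lia : 0 ≠ pb.dim)]

variable {F S : Type*} [Field F] [CommRing S] [Algebra F S]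

theorem norm_algebraMap_sub_smul_gen_of_minpoly_eq_trinomial (pb : PowerBasis F S)
    (hdim : 2 ≤ pb.dim) {a c : F} (hmin : minpoly F pb.gen = X ^ pb.dim + C a * X - C c)
    (s t : F) :
    Algebra.norm F (algebraMap F S s - t • pb.gen) =
      s ^ pb.dim + a * s * t ^ (pb.dim - 1) - c * t ^ pb.dim := by
  rcases eq_or_ne t 0 with rfl | ht
  · simp [Algebra.norm_algebraMap_of_basis pb.basis, (by lia : pb.dim ≠ 0),
      (by lia : pb.dim - 1 ≠ 0)]
  · have hpow : t ^ pb.dim = t ^ (pb.dim - 1) * t := (pow_sub_one_mul (by lia) t).symm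
    rw [norm_algebraMap_sub_smul_gen pb s ht, hmin]
    simp only [eval_sub, eval_add, eval_mul, eval_pow, eval_X, eval_C, div_pow]
    rw [mul_sub, mul_add, mul_div_cancel₀ _ (pow_ne_zero _ ht), hpow]
    field_simp

theorem norm_aeval_derivative_of_minpoly_eq_trinomial [IsDomain S] (pb : PowerBasis F S)
    (hdim : 2 ≤ pb.dim) {a c : F} (hmin : minpoly F pb.gen = X ^ pb.dim + C a * X - C c) :
    Algebra.norm F (aeval pb.gen (derivative (minpoly F pb.gen))) =
      (-1) ^ (pb.dim - 1) *
        (pb.dim ^ pb.dim * c ^ (pb.dim - 1) + (pb.dim - 1) ^ (pb.dim - 1) * a ^ pb.dim) := by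
  have hroot : aeval pb.gen (X ^ pb.dim + C a * X - C c) = 0 := hmin ▸ minpoly.aeval F pb.gen
  have hprod : Algebra.norm F pb.gen *
      Algebra.norm F (aeval pb.gen (derivative (minpoly F pb.gen))) =
        c * (pb.dim ^ pb.dim * c ^ (pb.dim - 1) + (pb.dim - 1) ^ (pb.dim - 1) * a ^ pb.dim) := by
    rw [← map_mul, hmin, self_mul_aeval_derivative_trinomial hroot,
      norm_algebraMap_sub_smul_gen_of_minpoly_eq_trinomial pb hdim hmin]
    obtain ⟨m, hm⟩ : ∃ m, pb.dim = m + 1 := Nat.exists_eq_succ_of_ne_zero (by lia)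
    simp only [hm, Nat.add_sub_cancel, Nat.cast_add, Nat.cast_one, mul_pow]
    ring
  have hsign : ((-1) ^ (pb.dim - 1) * (-1) ^ (pb.dim - 1) : F) = 1 :=
    pow_mul_pow_eq_one _ (by norm_num)
  have hgen_norm : Algebra.norm F pb.gen ≠ 0 :=
    (Algebra.norm_ne_zero_iff_of_basis pb.basis).2 (gen_ne_zero_of_two_le_dim pb hdim)
  refine mul_left_cancel₀ hgen_norm ?_
  rw [hprod, norm_gen_of_minpoly_eq_trinomial pb hdim hmin, mul_mul_mul_comm, hsign, one_mul]

theorem discr_powerBasis_of_minpoly_eq_trinomial {L : Type*} [Field L] [Algebra F L]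
    (pb : PowerBasis F L) (hdim : 2 ≤ pb.dim) {a c : F}
    (hmin : minpoly F pb.gen = X ^ pb.dim + C a * X - C c) :
    Algebra.discr F pb.basis = (-1) ^ ((pb.dim - 1) * (pb.dim - 2) / 2) *
      (pb.dim ^ pb.dim * c ^ (pb.dim - 1) + (pb.dim - 1) ^ (pb.dim - 1) * a ^ pb.dim) := by
  rw [discr_powerBasis_eq_norm_aeval_derivative,
    norm_aeval_derivative_of_minpoly_eq_trinomial pb hdim hmin, ← mul_assoc,
    neg_one_pow_triangle_mul_neg_one_pow]

end Trinomial

theorem stmt1_general {F L : Type*} [Field F] [Field L] [Algebra F L]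
    {n : ℕ} (hn : 2 ≤ n) (a c : F) (hirr : Irreducible (X ^ n + C a * X - C c)) {θ : L}
    (hθ : aeval θ (X ^ n + C a * X - C c) = 0) (hgen : F⟮θ⟯ = ⊤) :
    Algebra.discr F (fun i : Fin n => θ ^ (i : ℕ)) = (-1) ^ ((n - 1) * (n - 2) / 2) *
      (n ^ n * c ^ (n - 1) + (n - 1) ^ (n - 1) * a ^ n) := by
  have hmin : minpoly F θ = X ^ n + C a * X - C c := minpoly_eq_trinomial hn hirr hθ
  have hint : IsIntegral F θ := minpoly.ne_zero_iff.1 (hmin ▸ hirr.ne_zero)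
  have htop : Algebra.adjoin F {θ} = ⊤ :=
    (adjoin_simple_eq_top_iff_of_isAlgebraic hint.isAlgebraic).1 hgen
  obtain ⟨pb, rfl⟩ : ∃ pb : PowerBasis F L, pb.gen = θ :=
    ⟨.ofAdjoinEqTop hint htop, PowerBasis.ofAdjoinEqTop_gen hint htop⟩
  obtain rfl : pb.dim = n := by rw [← pb.natDegree_minpoly, hmin, natDegree_trinomial hn]
  rw [← pb.coe_basis]
  exact discr_powerBasis_of_minpoly_eq_trinomial pb hn hmin

/-- For `n ≥ 2` with `gₙ = Xⁿ + X - 1` irreducible over `ℚ` and `θ` a root of `gₙ`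
generating the number field `Kₙ = ℚ(θ)`, the discriminant of the `ℚ`-basis
`(1, θ, …, θ^{n-1})` of `Kₙ` equals `(-1)^{(n-1)(n-2)/2} · (nⁿ + (n-1)^{n-1})`. -/
theorem stmt1 (n : ℕ) (hn : 2 ≤ n)
    (hirr : Irreducible ((X : ℚ[X]) ^ n + X - 1))
    (K : Type*) [Field K] [NumberField K]
    (θ : K) (hθ : Polynomial.aeval θ ((X : ℚ[X]) ^ n + X - 1) = 0)
    (hgen : IntermediateField.adjoin ℚ {θ} = ⊤) :
    Algebra.discr ℚ (fun i : Fin n => θ ^ (i : ℕ))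
      = (-1 : ℚ) ^ ((n - 1) * (n - 2) / 2) * ((n ^ n + (n - 1) ^ (n - 1) : ℕ) : ℚ) := by
  simpa [Nat.cast_pred (by lia : 0 < n)] using
    stmt1_general hn 1 1 (by simpa using hirr) (by simpa using hθ) hgen
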